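/- arXiv:2605.12268 — 3 statements merged into one kernel-verified Lean document; each statement's English description precedes it below -/
import Mathlib

section
/- If d ≡ 0 (mod 4) and d+1 is a perfect square, then for every m ∈ ℚ_{>0} there is a regular d-simplex of squared edge length m with vertices in ℚ^d; if d ≡ 0 (mod 4) and d+1 is not a perfect square, then no regular d-simplex with vertices in ℚ^d exists. -/
/-- A regular `d`-simplex in `ℚⁿ` of squared edge length `m`. -/
def IsRegularSimplex (d n : ℕ) (m : ℚ) (v : Fin (d + 1) → Fin n → ℚ) : Prop :=
  AffineIndependent ℚ v ∧ ∀ i j, i ≠ j → ∑ k, (v i k - v j k) ^ 2 = m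

open scoped Matrix Kronecker

theorem Matrix.det_smul_one_add_allOnes {n : Type*} [Fintype n] [DecidableEq n] (c : ℚ) :
    (c • (1 + Matrix.of fun _ _ => 1 : Matrix n n ℚ)).det =
      c ^ Fintype.card n * (Fintype.card n + 1) := by
  have h : (Matrix.of fun _ _ => 1 : Matrix n n ℚ) =
      Matrix.replicateCol Unit (fun _ : n => (1 : ℚ)) *
        Matrix.replicateRow Unit (fun _ : n => (1 : ℚ)) := by
    ext i j
    simp [Matrix.mul_apply]
  rw [Matrix.det_smul, h, Matrix.det_one_add_replicateCol_mul_replicateRow]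
  simp [dotProduct, add_comm]

/-- Every nonnegative rational is a sum of four rational squares. -/
theorem Rat.sum_four_squares {q : ℚ} (hq : 0 ≤ q) :
    ∃ a b c e : ℚ, a ^ 2 + b ^ 2 + c ^ 2 + e ^ 2 = q := by
  obtain ⟨a, b, c, e, h⟩ := Nat.sum_four_squares (q.num.toNat * q.den)
  have hden : (q.den : ℚ) ≠ 0 := by exact_mod_cast q.den_ne_zero
  have hnum : ((q.num.toNat : ℕ) : ℚ) = q.num := by
    exact_mod_cast Int.toNat_of_nonneg (Rat.num_nonneg.mpr hq)
  have h' : (a : ℚ) ^ 2 + b ^ 2 + c ^ 2 + e ^ 2 = q.num * q.den := by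
    rw [← hnum]
    exact_mod_cast h
  refine ⟨a / q.den, b / q.den, c / q.den, e / q.den, ?_⟩
  calc _ = ((a : ℚ) ^ 2 + b ^ 2 + c ^ 2 + e ^ 2) / q.den ^ 2 := by ring
    _ = q.num / q.den := by rw [h']; field_simp
    _ = q := Rat.num_div_den q

/-- In dimension divisible by four, every nonnegative rational is the multiplier of a rational
similarity. -/
theorem exists_matrix_mul_transpose_eq_smul_one (k : ℕ) {q : ℚ} (hq : 0 ≤ q) :
    ∃ B : Matrix (Fin (k * 4)) (Fin (k * 4)) ℚ, B * Bᵀ = q • 1 := by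
  obtain ⟨a, b, c, e, rfl⟩ := Rat.sum_four_squares hq
  let Q : Matrix (Fin 4) (Fin 4) ℚ := !![a, b, c, e; -b, a, -e, c; -c, e, a, -b; -e, -c, b, a]
  have hQ : Q * Qᵀ = (a ^ 2 + b ^ 2 + c ^ 2 + e ^ 2) • 1 := by
    ext i j
    fin_cases i <;> fin_cases j <;>
      simp [Q, Matrix.mul_apply, Fin.sum_univ_four] <;> ring
  refine ⟨Matrix.reindex finProdFinEquiv finProdFinEquiv
    ((1 : Matrix (Fin k) (Fin k) ℚ) ⊗ₖ Q), ?_⟩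
  rw [Matrix.transpose_reindex, Matrix.reindex_apply, Matrix.reindex_apply,
    Matrix.submatrix_mul_equiv, ← Matrix.kroneckerMap_transpose, ← Matrix.mul_kronecker_mul, hQ,
    Matrix.transpose_one, one_mul, Matrix.kronecker_smul, Matrix.one_kronecker_one]
  ext i j
  simp [Matrix.one_apply, -finProdFinEquiv_symm_apply]

/-- The matrix `1 + c J`, with `J` the all-ones matrix, is a square root of `1 + J` for a suitable
rational `c` as soon as the size plus one is a square. -/
theorem exists_matrix_mul_transpose_eq_one_add_allOnes {d u : ℕ} (hd : 1 ≤ d)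
    (hu : d + 1 = u ^ 2) :
    ∃ A : Matrix (Fin d) (Fin d) ℚ, A * Aᵀ = 1 + Matrix.of fun _ _ => 1 := by
  have hd0 : (d : ℚ) ≠ 0 := by
    exact_mod_cast (by omega : d ≠ 0)
  have hu' : (d : ℚ) + 1 = u ^ 2 := by exact_mod_cast hu
  have hc : 2 * (((u : ℚ) - 1) / d) + d * (((u : ℚ) - 1) / d) ^ 2 = 1 := by
    field_simp
    linear_combination -hu'
  generalize ((u : ℚ) - 1) / d = c at hc
  refine ⟨1 + c • Matrix.of fun _ _ => 1, ?_⟩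
  rw [Matrix.transpose_add, Matrix.transpose_one, Matrix.transpose_smul, mul_add, add_mul, add_mul]
  ext i j
  simp only [Matrix.add_apply, Matrix.mul_one, Matrix.one_mul, Matrix.smul_apply,
    Matrix.mul_apply, Matrix.of_apply, Matrix.transpose_apply, smul_eq_mul, Finset.sum_const,
    Finset.card_univ, Fintype.card_fin, nsmul_eq_mul]
  linear_combination hc

/-- The edge vectors of a regular simplex from its first vertex have Gram matrix `m / 2 • (1 + J)`,
with `J` the all-ones matrix. -/
theorem IsRegularSimplex.gram {d n : ℕ} {m : ℚ} {v : Fin (d + 1) → Fin n → ℚ}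
    (h : IsRegularSimplex d n m v) :
    (Matrix.of fun (i : Fin d) k => v i.succ k - v 0 k) *
      (Matrix.of fun (i : Fin d) k => v i.succ k - v 0 k)ᵀ =
        (m / 2) • (1 + Matrix.of fun _ _ => 1) := by
  ext i j
  have hi := h.2 i.succ 0 (Fin.succ_ne_zero i)
  have hj := h.2 j.succ 0 (Fin.succ_ne_zero j)
  have polarization : 2 * ∑ k, (v i.succ k - v 0 k) * (v j.succ k - v 0 k) =
      ∑ k, (v i.succ k - v 0 k) ^ 2 + ∑ k, (v j.succ k - v 0 k) ^ 2 -
        ∑ k, (v i.succ k - v j.succ k) ^ 2 := by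
    rw [Finset.mul_sum, ← Finset.sum_add_distrib, ← Finset.sum_sub_distrib]
    exact Finset.sum_congr rfl fun k _ => by ring
  rw [hi, hj] at polarization
  simp only [Matrix.mul_apply, Matrix.of_apply, Matrix.transpose_apply, Matrix.smul_apply,
    Matrix.add_apply, Matrix.one_apply, smul_eq_mul]
  split_ifs with hij
  · subst hij
    simp only [sub_self, ne_eq, OfNat.ofNat_ne_zero, not_false_eq_true, zero_pow,
      Finset.sum_const_zero] at polarization
    linear_combination polarization / 2
  · rw [h.2 _ _ ((Fin.succ_injective d).ne hij)] at polarization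
    linear_combination polarization / 2

/-- A matrix whose rows have Gram matrix `m / 2 • (1 + J)`, with `J` the all-ones matrix, spans a
regular simplex together with the origin. -/
theorem isRegularSimplex_cons_zero {d : ℕ} {m : ℚ} (hm : 0 < m) {W : Matrix (Fin d) (Fin d) ℚ}
    (hW : W * Wᵀ = (m / 2) • (1 + Matrix.of fun _ _ => 1)) :
    IsRegularSimplex d d m (Fin.cons 0 W.row) := by
  have inner_rows (i j : Fin d) : ∑ k, W i k * W j k = m / 2 * ((if i = j then 1 else 0) + 1) := by
    simpa [Matrix.mul_apply, Matrix.one_apply] using congrFun (congrFun hW i) j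
  have norm_row (i : Fin d) : ∑ k, W i k ^ 2 = m := by
    have := inner_rows i i
    simp only [if_true, ← sq] at this
    linear_combination this
  refine ⟨?_, fun i j hij => ?_⟩
  · have hunit : IsUnit W := by
      rw [Matrix.isUnit_iff_isUnit_det, isUnit_iff_ne_zero]
      intro h0
      have h := congrArg Matrix.det hW
      rw [Matrix.det_mul, h0, zero_mul, Matrix.det_smul_one_add_allOnes] at h
      have : 0 < (m / 2) ^ Fintype.card (Fin d) * ((Fintype.card (Fin d) : ℚ) + 1) := by positivity
      exact this.ne h
    rw [affineIndependent_iff_linearIndependent_vsub ℚ _ (0 : Fin (d + 1)),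
      ← linearIndependent_equiv (finSuccAboveEquiv (0 : Fin (d + 1)))]
    have hrows : LinearIndependent ℚ W.row := Matrix.linearIndependent_rows_iff_isUnit.mpr hunit
    have hedges : (fun i : {x : Fin (d + 1) // x ≠ 0} =>
        (Fin.cons 0 W.row : Fin (d + 1) → Fin d → ℚ) i -ᵥ
          (Fin.cons 0 W.row : Fin (d + 1) → Fin d → ℚ) 0) ∘ finSuccAboveEquiv 0 = W.row := by
      ext i k
      simp [finSuccAboveEquiv_apply]
    rwa [hedges]
  · cases i using Fin.cases with
    | zero =>
      cases j using Fin.cases with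
      | zero => exact absurd rfl hij
      | succ j => simpa using norm_row j
    | succ i =>
      cases j using Fin.cases with
      | zero => simpa using norm_row i
      | succ j =>
        have hij' : i ≠ j := fun h => hij (congrArg Fin.succ h)
        have expand : ∑ k, (W i k - W j k) ^ 2 =
            ∑ k, W i k ^ 2 + ∑ k, W j k ^ 2 - 2 * ∑ k, W i k * W j k := by
          rw [Finset.mul_sum, ← Finset.sum_add_distrib, ← Finset.sum_sub_distrib]
          exact Finset.sum_congr rfl fun k _ => by ring
        rw [norm_row, norm_row, inner_rows, if_neg hij'] at expand
        simp only [Fin.cons_succ, Matrix.row_apply]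
        linear_combination expand

theorem IsRegularSimplex.ne_zero {d n : ℕ} {m : ℚ} {v : Fin (d + 1) → Fin n → ℚ} (hd : 1 ≤ d)
    (h : IsRegularSimplex d n m v) : m ≠ 0 := by
  rintro rfl
  have hne : (0 : Fin (d + 1)) ≠ Fin.last d := by
    simpa [Fin.ext_iff] using (by omega : 0 ≠ d)
  refine hne (h.1.injective (funext fun k => ?_))
  have := (Finset.sum_eq_zero_iff_of_nonneg fun _ _ => sq_nonneg _).mp (h.2 _ _ hne) k
    (Finset.mem_univ k)
  exact sub_eq_zero.mp (pow_eq_zero_iff two_ne_zero |>.mp this)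

/-- In even dimension `d`, a full-dimensional rational regular simplex forces `d + 1` to be a
square. -/
theorem IsRegularSimplex.isSquare_succ {d : ℕ} {m : ℚ} {v : Fin (d + 1) → Fin d → ℚ} (hd : 1 ≤ d)
    (heven : Even d) (h : IsRegularSimplex d d m v) : IsSquare (d + 1) := by
  have hdet := congrArg Matrix.det h.gram
  rw [Matrix.det_mul, Matrix.det_transpose, Matrix.det_smul_one_add_allOnes,
    Fintype.card_fin] at hdet
  obtain ⟨r, rfl⟩ := heven
  have hm : (m / 2) ^ r ≠ 0 := pow_ne_zero _ (div_ne_zero (h.ne_zero hd) two_ne_zero)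
  rw [← Rat.isSquare_natCast_iff]
  refine ⟨(Matrix.of fun (i : Fin (r + r)) k => v i.succ k - v 0 k).det / (m / 2) ^ r, ?_⟩
  rw [div_mul_div_comm, hdet, pow_add, mul_div_cancel_left₀ _ (mul_ne_zero hm hm)]
  push_cast
  ring

/-- For `d ≡ 0 (mod 4)`: if `d + 1` is a perfect square then every positive rational is a
squared edge length of a regular `d`-simplex in `ℚ^d`; otherwise no such simplex exists. -/
theorem codim_zero_zero_mod_four (d : ℕ) (hd1 : 1 ≤ d) (hd : d % 4 = 0) :
    ((∃ u : ℕ, d + 1 = u ^ 2) →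
        ∀ m : ℚ, 0 < m → ∃ v : Fin (d + 1) → Fin d → ℚ, IsRegularSimplex d d m v) ∧
      ((¬ ∃ u : ℕ, d + 1 = u ^ 2) →
        ¬ ∃ (m : ℚ) (v : Fin (d + 1) → Fin d → ℚ), IsRegularSimplex d d m v) := by
  obtain ⟨k, rfl⟩ : ∃ k, d = k * 4 := ⟨d / 4, by omega⟩
  constructor
  · rintro ⟨u, hu⟩ m hm
    obtain ⟨A, hA⟩ := exists_matrix_mul_transpose_eq_one_add_allOnes hd1 hu
    obtain ⟨B, hB⟩ := exists_matrix_mul_transpose_eq_smul_one k (half_pos hm).le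
    refine ⟨_, isRegularSimplex_cons_zero hm (W := A * B) ?_⟩
    rw [Matrix.transpose_mul, Matrix.mul_assoc, ← Matrix.mul_assoc B, hB, Matrix.smul_mul,
      Matrix.one_mul, Matrix.mul_smul, hA]
  · rintro hns ⟨m, v, hv⟩
    obtain ⟨u, hu⟩ := hv.isSquare_succ hd1 ⟨k * 2, by ring⟩
    exact hns ⟨u, by rw [hu, sq]⟩
end

section
/- For every d ≥ 1 and every m ∈ ℚ_{>0}, there exists a regular d-simplex of squared edge length m with vertices in ℚ^{d+3}: i.e. d+1 affinely independent points of ℚ^{d+3} with all pairwise squared distances equal to m. -/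
/-- A natural number congruent to `1` or `2` modulo `4` is a square modulo some prime `q ≡ 1 [MOD 4]`
with `N ∣ q + 1`. -/
theorem exists_prime_dvd_add_one_isSquare {N : ℕ} (hN : N % 4 = 1 ∨ N % 4 = 2) :
    ∃ q : ℕ, q.Prime ∧ q % 4 = 1 ∧ N ∣ q + 1 ∧ IsSquare (N : ZMod q) := by
  rcases hN with hN | hN
  · obtain ⟨q, -, hq, hmod⟩ := Nat.forall_exists_prime_gt_and_modEq 0 (q := 4 * N)
      (a := 2 * N - 1) (by omega) (by
        refine Nat.Coprime.mul_right ?_ ?_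
        · have : Nat.Coprime (2 * N - 1) 2 := by
            rw [Nat.coprime_two_right, Nat.odd_iff]; omega
          exact Nat.Coprime.pow_right 2 this
        · rw [← Nat.isCoprime_iff_coprime]
          exact ⟨-1, 2, by push_cast [show 1 ≤ 2 * N by omega]; ring⟩)
    have hdvd : ((4 * N : ℕ) : ℤ) ∣ q - (2 * N - 1) := by
      have := (Nat.modEq_iff_dvd.mp hmod.symm)
      rwa [Nat.cast_sub (by omega)] at this
    obtain ⟨k, hk⟩ := hdvd
    push_cast at hk
    have hq4 : q % 4 = 1 := by
      have : (q : ℤ) = 4 * (N * k) + (2 * N - 1) := by linarith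
      omega
    have : Fact q.Prime := ⟨hq⟩
    refine ⟨q, hq, hq4, ?_, ?_⟩
    · zify
      exact ⟨4 * k + 2, by linarith⟩
    · have h1 : jacobiSym (N : ℤ) q = 1 := by
        rw [jacobiSym.quadratic_reciprocity_one_mod_four hN (Nat.odd_iff.mpr (by omega)),
          jacobiSym.mod_left, show (q : ℤ) = -1 + N * (4 * k + 2) by linarith,
          Int.add_mul_emod_self_left, ← jacobiSym.mod_left,
          jacobiSym.at_neg_one (Nat.odd_iff.mpr (by omega)), ZMod.χ₄_nat_one_mod_four hN]
      simpa using ZMod.isSquare_of_jacobiSym_eq_one h1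
  · obtain ⟨M, rfl⟩ : ∃ M, N = 2 * M := ⟨N / 2, by omega⟩
    obtain ⟨q, -, hq, hmod⟩ := Nat.forall_exists_prime_gt_and_modEq 0 (q := 4 * (2 * M))
      (a := 2 * M - 1) (by omega) (by
        refine Nat.Coprime.mul_right ?_ ?_
        · have : Nat.Coprime (2 * M - 1) 2 := by
            rw [Nat.coprime_two_right, Nat.odd_iff]; omega
          exact Nat.Coprime.pow_right 2 this
        · rw [← Nat.isCoprime_iff_coprime]
          exact ⟨-1, 1, by push_cast [show 1 ≤ 2 * M by omega]; ring⟩)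
    have hdvd : ((4 * (2 * M) : ℕ) : ℤ) ∣ q - (2 * M - 1) := by
      have := (Nat.modEq_iff_dvd.mp hmod.symm)
      rwa [Nat.cast_sub (by omega)] at this
    obtain ⟨k, hk⟩ := hdvd
    push_cast at hk
    have hq8 : (q : ℤ) = 8 * (M * k) + (2 * M - 1) := by linarith
    have hq4 : q % 4 = 1 := by omega
    have hMo : Odd M := Nat.odd_iff.mpr (by omega)
    have hqo : Odd q := Nat.odd_iff.mpr (by omega)
    have : Fact q.Prime := ⟨hq⟩
    refine ⟨q, hq, hq4, ?_, ?_⟩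
    · zify
      exact ⟨4 * k + 1, by linarith⟩
    · have h1 : jacobiSym ((2 * M : ℕ) : ℤ) q = 1 := by
        push_cast
        rw [jacobiSym.mul_left, jacobiSym.at_two hqo,
          jacobiSym.quadratic_reciprocity_one_mod_four' hMo hq4,
          jacobiSym.mod_left, show (q : ℤ) = -1 + M * (8 * k + 2) by linarith,
          Int.add_mul_emod_self_left, ← jacobiSym.mod_left, jacobiSym.at_neg_one hMo,
          ZMod.χ₈_nat_eq_if_mod_eight, ZMod.χ₄_nat_eq_if_mod_four]
        have : M % 4 = 1 ∧ q % 8 = 1 ∨ M % 4 = 3 ∧ q % 8 = 5 := by omega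
        rcases this with ⟨h, h'⟩ | ⟨h, h'⟩
        · simp [h, h', show q % 2 = 1 by omega, show M % 2 = 1 by omega]
        · simp [h, h', show q % 2 = 1 by omega, show M % 2 = 1 by omega]
      simpa using ZMod.isSquare_of_jacobiSym_eq_one h1

/-- Pigeonhole principle for the lattice `x ≡ y [ZMOD N]`, `x ≡ b * z [ZMOD q]`. -/
theorem exists_small_lattice_vector {N q : ℕ} (hN : 0 < N) (hq : 0 < q) (b : ZMod q) :
    ∃ x y z : ℤ, ¬(x = 0 ∧ y = 0 ∧ z = 0) ∧ x ^ 2 ≤ q * N ∧ y ^ 2 ≤ N ∧ z ^ 2 ≤ q ∧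
      (x : ZMod N) = y ∧ (x : ZMod q) = b * z := by
  have : NeZero N := ⟨hN.ne'⟩
  have : NeZero q := ⟨hq.ne'⟩
  let box := Finset.range ((q * N).sqrt + 1) ×ˢ Finset.range (N.sqrt + 1) ×ˢ
    Finset.range (q.sqrt + 1)
  let f : ℕ × ℕ × ℕ → ZMod N × ZMod q := fun p => (p.1 - p.2.1, p.1 - b * p.2.2)
  have hcard : (Finset.univ : Finset (ZMod N × ZMod q)).card < box.card := by
    simp only [box, Finset.card_univ, Fintype.card_prod, ZMod.card, Finset.card_product,
      Finset.card_range]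
    have h1 := Nat.lt_succ_sqrt' (q * N)
    have h2 := Nat.lt_succ_sqrt' N
    have h3 := Nat.lt_succ_sqrt' q
    simp only [Nat.succ_eq_add_one] at h1 h2 h3
    refine lt_of_pow_lt_pow_left₀ 2 (Nat.zero_le _) ?_
    calc (N * q) ^ 2 = (q * N) * (N * q) := by ring
      _ < ((q * N).sqrt + 1) ^ 2 * ((N.sqrt + 1) ^ 2 * (q.sqrt + 1) ^ 2) := by gcongr
      _ = _ := by ring
  obtain ⟨p, hp, p', hp', hne, hf⟩ := Finset.exists_ne_map_eq_of_card_lt_of_maps_to hcard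
    (f := f) (fun _ _ => Finset.mem_coe.mpr (Finset.mem_univ _))
  have bound {a a' n : ℕ} (ha : a < n.sqrt + 1) (ha' : a' < n.sqrt + 1) :
      ((a : ℤ) - a') ^ 2 ≤ n := by
    have h : ((n.sqrt : ℤ)) ^ 2 ≤ n := by exact_mod_cast Nat.sqrt_le' n
    refine le_trans ?_ h
    exact sq_le_sq' (by omega) (by omega)
  simp only [box, Finset.mem_product, Finset.mem_range] at hp hp'
  simp only [f, Prod.mk.injEq] at hf
  refine ⟨p.1 - p'.1, p.2.1 - p'.2.1, p.2.2 - p'.2.2, ?_, ?_, bound hp.2.1 hp'.2.1,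
    bound hp.2.2 hp'.2.2, ?_, ?_⟩
  · rintro ⟨h1, h2, h3⟩
    exact hne (Prod.ext (by omega) (Prod.ext (by omega) (by omega)))
  · exact_mod_cast bound hp.1 hp'.1
  · push_cast
    linear_combination hf.1
  · push_cast
    linear_combination hf.2

/-- A case of Legendre's theorem on ternary quadratic forms. -/
theorem exists_rat_eq_sq_add_prime_mul_sq {N q : ℕ} (hN : 0 < N) (hq : q.Prime)
    (hdvd : N ∣ q + 1) (hsq : IsSquare (N : ZMod q)) :
    ∃ x y : ℚ, (N : ℚ) = x ^ 2 + q * y ^ 2 := by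
  obtain ⟨b, hb⟩ := hsq
  obtain ⟨x, y, z, hne, hx, hy, hz, hxy, hxz⟩ := exists_small_lattice_vector hN hq.pos b
  have hN0 : (0 : ℤ) < N := by exact_mod_cast hN
  have hq0 : (0 : ℤ) < q := by exact_mod_cast hq.pos
  have hdN : (N : ℤ) ∣ x ^ 2 + q * y ^ 2 - N * z ^ 2 := by
    rw [← ZMod.intCast_zmod_eq_zero_iff_dvd _ N]
    have h : ((q + 1 : ℕ) : ZMod N) = 0 := (ZMod.natCast_eq_zero_iff _ _).mpr hdvd
    push_cast at h ⊢
    rw [hxy, ZMod.natCast_self]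
    linear_combination (y : ZMod N) ^ 2 * h
  have hdq : (q : ℤ) ∣ x ^ 2 + q * y ^ 2 - N * z ^ 2 := by
    rw [← ZMod.intCast_zmod_eq_zero_iff_dvd _ q]
    push_cast
    rw [hxz, hb, ZMod.natCast_self]
    ring
  have hcop : IsCoprime (q : ℤ) N := by
    obtain ⟨c, hc⟩ := hdvd
    exact ⟨-1, c, by have : ((q : ℤ) + 1) = N * c := by exact_mod_cast hc
                     linarith⟩
  obtain ⟨k, hk⟩ := hcop.mul_dvd hdq hdN
  have hqN : (0 : ℤ) < q * N := by positivity
  have hz' : z ^ 2 ≠ q := by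
    intro h
    have : IsSquare (q : ℤ) := ⟨z, by rw [← h, sq]⟩
    exact (Nat.prime_iff_prime_int.mp hq).irreducible.not_isSquare this
  have hzlt : z ^ 2 < q := lt_of_le_of_ne hz hz'
  have hklo : -1 < k := by
    have : (q : ℤ) * N * (-1) < q * N * k := by
      rw [← hk]
      nlinarith [sq_nonneg x, mul_nonneg hq0.le (sq_nonneg y)]
    exact lt_of_mul_lt_mul_left this hqN.le
  have hkhi : k ≤ 2 := by
    have : (q : ℤ) * N * k ≤ q * N * 2 := by
      rw [← hk]
      nlinarith [mul_nonneg hN0.le (sq_nonneg z)]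
    exact le_of_mul_le_mul_left this hqN
  have hkQ : (x : ℚ) ^ 2 + q * y ^ 2 - N * z ^ 2 = q * N * k := by exact_mod_cast hk
  obtain rfl | rfl | rfl : k = 0 ∨ k = 1 ∨ k = 2 := by omega
  · have hz0 : z ≠ 0 := by
      rintro rfl
      have hx0 : x = 0 := by
        have : x ^ 2 = 0 := by nlinarith [sq_nonneg x, mul_nonneg hq0.le (sq_nonneg y)]
        simpa using this
      subst hx0
      have hy0 : y = 0 := by simpa [hq.ne_zero] using hk
      exact hne ⟨rfl, hy0, rfl⟩
    have : (z : ℚ) ≠ 0 := by exact_mod_cast hz0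
    refine ⟨x / z, y / z, ?_⟩
    field_simp
    push_cast at hkQ
    linarith
  · have : (z : ℚ) ^ 2 + q ≠ 0 := by
      have : (0 : ℚ) < q := by exact_mod_cast hq.pos
      positivity
    refine ⟨(x * z + q * y) / (z ^ 2 + q), (x - y * z) / (z ^ 2 + q), ?_⟩
    field_simp
    push_cast at hkQ
    linear_combination (-(z ^ 2 + q : ℚ)) * hkQ
  · have : y ^ 2 = N := by
      have := mul_nonneg hN0.le (sq_nonneg z)
      refine le_antisymm hy (le_of_mul_le_mul_left ?_ hq0)
      nlinarith
    exact ⟨y, 0, by simpa using (by exact_mod_cast this.symm : (N : ℚ) = (y : ℚ) ^ 2)⟩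

/-- The part of the three-square theorem over `ℚ` for residues `1` and `2` modulo `4`. -/
theorem exists_rat_sum_three_squares {N : ℕ} (hN : N % 4 = 1 ∨ N % 4 = 2) :
    ∃ x y z : ℚ, x ^ 2 + y ^ 2 + z ^ 2 = N := by
  obtain ⟨q, hq, hq4, hdvd, hsq⟩ := exists_prime_dvd_add_one_isSquare hN
  obtain ⟨x, y, hxy⟩ := exists_rat_eq_sq_add_prime_mul_sq (by omega) hq hdvd hsq
  have : Fact q.Prime := ⟨hq⟩
  obtain ⟨a, b, hab⟩ := Nat.Prime.sq_add_sq (p := q) (by omega)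
  refine ⟨x, a * y, b * y, ?_⟩
  rw [hxy, ← hab]
  push_cast
  ring

/-- Every positive rational is a positive integer up to a nonzero rational square. -/
theorem exists_nat_mul_sq_eq {r : ℚ} (hr : 0 < r) :
    ∃ t : ℕ, ∃ s : ℚ, 0 < t ∧ (t : ℚ) * s ^ 2 = r := by
  have hnum := Rat.num_pos.mpr hr
  refine ⟨r.num.toNat * r.den, (r.den : ℚ)⁻¹, Nat.mul_pos (by omega) r.den_pos, ?_⟩
  have hcast : ((r.num.toNat : ℕ) : ℚ) = r.num := by
    exact_mod_cast Int.toNat_of_nonneg hnum.le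
  have hden : (r.den : ℚ) ≠ 0 := by exact_mod_cast r.den_nz
  push_cast
  rw [hcast]
  nth_rw 4 [← Rat.num_div_den r]
  field_simp

theorem exists_rat_sum_four_squares {r : ℚ} (hr : 0 < r) :
    ∃ a b c d : ℚ, a ^ 2 + b ^ 2 + c ^ 2 + d ^ 2 = r := by
  obtain ⟨t, s, -, rfl⟩ := exists_nat_mul_sq_eq hr
  obtain ⟨a, b, c, d, rfl⟩ := Nat.sum_four_squares t
  exact ⟨a * s, b * s, c * s, d * s, by push_cast; ring⟩

/-- The form `⟨n, 1, 1, 1⟩` with `n ≡ 1 [MOD 4]` represents every positive rational. -/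
theorem exists_rat_mul_sq_add_three_squares {n : ℕ} (hn : n % 4 = 1) {r : ℚ} (hr : 0 < r) :
    ∃ w x y z : ℚ, n * w ^ 2 + (x ^ 2 + y ^ 2 + z ^ 2) = r := by
  obtain ⟨t, s, ht, rfl⟩ := exists_nat_mul_sq_eq hr
  obtain ⟨a, b, rfl, ha⟩ := Nat.sq_mul_squarefree t
  have ha0 : a % 4 ≠ 0 := by
    intro h
    have := ha 2 (Nat.dvd_of_mod_eq_zero h)
    simp at this
  by_cases ha3 : a % 4 = 3
  · have hle : n ≤ a * (2 * n + 1) ^ 2 := by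
      have : 1 ≤ a := by omega
      nlinarith
    obtain ⟨x, y, z, h⟩ := exists_rat_sum_three_squares (N := a * (2 * n + 1) ^ 2 - n) (by
      right
      have : a * (2 * n + 1) ^ 2 = 4 * (a * (n ^ 2 + n)) + a := by ring
      omega)
    rw [Nat.cast_sub hle] at h
    push_cast at h
    have hne : (2 * n + 1 : ℚ) ≠ 0 := by positivity
    set e : ℚ := b * s / (2 * n + 1) with he
    refine ⟨e, x * e, y * e, z * e, ?_⟩
    have hbs : (b : ℚ) * s = e * (2 * n + 1) := by rw [he]; field_simp
    push_cast
    linear_combination e ^ 2 * h - a * (b * s + e * (2 * n + 1)) * hbs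
  · obtain ⟨x, y, z, h⟩ := exists_rat_sum_three_squares (N := a) (by omega)
    exact ⟨0, x * (b * s), y * (b * s), z * (b * s), by
      push_cast; linear_combination (b * s) ^ 2 * h⟩

theorem affineIndependent_of_sum_sub_sq_eq {ι κ : Type*} [Fintype κ] {v : ι → κ → ℚ} {m : ℚ}
    (hm : 0 < m) (hv : ∀ i j, i ≠ j → ∑ k, (v i k - v j k) ^ 2 = m) : AffineIndependent ℚ v := by
  classical
  rw [affineIndependent_iff]
  intro s w hw hwv
  have hcoord (k : κ) : ∑ j ∈ s, w j * v j k = 0 := by simpa using congrFun hwv k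
  set C : ℚ := ∑ j ∈ s, w j * ∑ k, v j k ^ 2
  have key (i : ι) (hi : i ∈ s) : -m * w i = C := by
    have h1 : ∑ j ∈ s, w j * ∑ k, (v i k - v j k) ^ 2 = -m * w i := by
      have : ∀ j ∈ s, w j * ∑ k, (v i k - v j k) ^ 2 = m * w j - if i = j then m * w j else 0 := by
        intro j _
        by_cases hij : i = j
        · simp [hij]
        · rw [hv i j hij, if_neg hij]; ring
      rw [Finset.sum_congr rfl this, Finset.sum_sub_distrib, ← Finset.mul_sum, hw,
        Finset.sum_ite_eq, if_pos hi]
      ring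
    have h2 : ∑ j ∈ s, w j * ∑ k, (v i k - v j k) ^ 2 = C := by
      have expand (j : ι) : w j * ∑ k, (v i k - v j k) ^ 2 =
          w j * ∑ k, v i k ^ 2 - ∑ k, 2 * v i k * (w j * v j k) + w j * ∑ k, v j k ^ 2 := by
        simp only [Finset.mul_sum, ← Finset.sum_sub_distrib, ← Finset.sum_add_distrib]
        exact Finset.sum_congr rfl fun k _ => by ring
      simp only [expand, Finset.sum_add_distrib, Finset.sum_sub_distrib]
      rw [← Finset.sum_mul, hw, Finset.sum_comm]
      simp only [← Finset.mul_sum, hcoord]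
      simp [C]
    rw [← h1, h2]
  have hsq : ∑ i ∈ s, w i ^ 2 = 0 := by
    have : -m * ∑ i ∈ s, w i ^ 2 = 0 := by
      calc -m * ∑ i ∈ s, w i ^ 2 = ∑ i ∈ s, w i * C := by
            rw [Finset.mul_sum]
            exact Finset.sum_congr rfl fun i hi => by rw [← key i hi]; ring
        _ = 0 := by rw [← Finset.sum_mul, hw, zero_mul]
    simpa [hm.ne'] using this
  intro i hi
  simpa using (Finset.sum_eq_zero_iff_of_nonneg fun i _ => sq_nonneg (w i)).mp hsq i hi

/-- Multiplication by a quaternion of norm `c`, taken blockwise, scales `ℚ^{4K}` by `c`. -/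
theorem exists_mul_transpose_eq_smul_one (K : ℕ) {c : ℚ} (hc : 0 < c) :
    ∃ U : Matrix (Fin (4 * K)) (Fin (4 * K)) ℚ, U * U.transpose = c • 1 := by
  obtain ⟨x, y, z, t, h⟩ := exists_rat_sum_four_squares hc
  let Q : Matrix (Fin 4) (Fin 4) ℚ :=
    !![x, y, z, t; -y, x, -t, z; -z, t, x, -y; -t, -z, y, x]
  have hQ : Q * Q.transpose = c • 1 := by
    rw [← h]
    ext i j
    fin_cases i <;> fin_cases j <;>
      simp [Q, Matrix.mul_apply, Fin.sum_univ_four] <;> ring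
  let B := Matrix.blockDiagonal fun _ : Fin K => Q
  have hB : B * B.transpose = c • 1 := by
    rw [Matrix.blockDiagonal_transpose, ← Matrix.blockDiagonal_mul, hQ]
    rw [← Matrix.blockDiagonal_one, ← Matrix.blockDiagonal_smul]
    rfl
  refine ⟨Matrix.reindex finProdFinEquiv finProdFinEquiv B, ?_⟩
  rw [Matrix.transpose_reindex, Matrix.reindex_apply, Matrix.reindex_apply,
    Matrix.submatrix_mul_equiv, hB]
  ext i j
  simp only [Matrix.submatrix_apply, Matrix.smul_apply, Matrix.one_apply,
    EmbeddingLike.apply_eq_iff_eq]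

theorem dotProduct_row_of_mul_transpose {n : Type*} [Fintype n] [DecidableEq n] {c : ℚ}
    {U : Matrix n n ℚ} (hU : U * U.transpose = c • 1) (i j : n) :
    U i ⬝ᵥ U j = if i = j then c else 0 := by
  have := congrFun (congrFun hU i) j
  simpa [Matrix.mul_apply, dotProduct, Matrix.one_apply] using this

theorem sum_sub_sq_eq_dotProduct {n : Type*} [Fintype n] (a b : n → ℚ) :
    ∑ k, (a k - b k) ^ 2 = (a - b) ⬝ᵥ (a - b) := by
  simp [dotProduct, sq]

theorem sum_sub_sq_row_of_mul_transpose {n : Type*} [Fintype n] [DecidableEq n] {c : ℚ}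
    {U : Matrix n n ℚ} (hU : U * U.transpose = c • 1) {i j : n} (hij : i ≠ j) :
    ∑ k, (U i k - U j k) ^ 2 = 2 * c := by
  rw [sum_sub_sq_eq_dotProduct, sub_dotProduct, dotProduct_sub, dotProduct_sub]
  simp only [dotProduct_row_of_mul_transpose hU, if_true, if_neg hij, if_neg hij.symm]
  ring

/-- Points orthogonal to a unit vector up to a common constant can be moved isometrically into a
coordinate hyperplane. -/
theorem exists_sum_sub_sq_eq_of_dotProduct_const {ι : Type*} {n : ℕ} (u : ι → Fin (n + 1) → ℚ)
    (f : Fin (n + 1) → ℚ) (hf : f ⬝ᵥ f = 1) {e : ℚ} (he : ∀ i, u i ⬝ᵥ f = e) :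
    ∃ v : ι → Fin n → ℚ, ∀ i j, ∑ k, (v i k - v j k) ^ 2 = ∑ k, (u i k - u j k) ^ 2 := by
  let e₀ : Fin (n + 1) → ℚ := Pi.single 0 1
  let g := f - e₀
  let R : (Fin (n + 1) → ℚ) → Fin (n + 1) → ℚ := fun a => a - (2 * (a ⬝ᵥ g) / (g ⬝ᵥ g)) • g
  have hRsub (a b) : R a - R b = R (a - b) := by
    ext k
    simp only [R, sub_dotProduct, Pi.sub_apply, Pi.smul_apply, smul_eq_mul]
    ring
  have hRR (a) : R a ⬝ᵥ R a = a ⬝ᵥ a := by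
    by_cases hg : g ⬝ᵥ g = 0
    · simp [R, hg]
    · simp only [R, sub_dotProduct, dotProduct_sub, smul_dotProduct, dotProduct_smul, smul_eq_mul,
        dotProduct_comm g a]
      field_simp
      ring
  have hgg : g ⬝ᵥ g = -2 * g 0 := by
    have h1 : g ⬝ᵥ g = f ⬝ᵥ f - 2 * f 0 + 1 := by
      simp only [g, e₀, sub_dotProduct, dotProduct_sub, dotProduct_single_one,
        single_one_dotProduct, Pi.sub_apply, Pi.single_eq_same]
      ring
    rw [h1, hf]
    simp only [g, e₀, Pi.sub_apply, Pi.single_eq_same]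
    ring
  have hR0 (a) : R a 0 = a ⬝ᵥ f := by
    have hag : a ⬝ᵥ g = a ⬝ᵥ f - a 0 := by
      simp only [g, e₀, dotProduct_sub, dotProduct_single_one]
    by_cases hg : g ⬝ᵥ g = 0
    · have hg0 : g = 0 := dotProduct_self_eq_zero.mp hg
      rw [hg0, dotProduct_zero] at hag
      simp only [R, hg0, smul_zero, sub_zero]
      linarith
    · have hg0 : g 0 ≠ 0 := fun h => hg (by rw [hgg, h, mul_zero])
      simp only [R, Pi.sub_apply, Pi.smul_apply, smul_eq_mul, hgg, hag]
      field_simp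
      ring
  refine ⟨fun i k => R (u i) k.succ, fun i j => ?_⟩
  rw [sum_sub_sq_eq_dotProduct (u i), ← hRR, ← hRsub, ← sum_sub_sq_eq_dotProduct,
    Fin.sum_univ_succ, hR0, hR0, he, he]
  simp

/-- Equidistant points in `ℚ^{d+3}` when `4 ∣ d`. -/
theorem exists_equidistant_of_four_dvd (k : ℕ) {m : ℚ} (hm : 0 < m) :
    ∃ v : Fin (4 * k + 1) → Fin (4 * k + 3) → ℚ,
      ∀ i j, i ≠ j → ∑ l, (v i l - v j l) ^ 2 = m := by
  obtain ⟨U, hU⟩ := exists_mul_transpose_eq_smul_one (k + 1) (half_pos hm)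
  obtain ⟨w, x, y, z, h⟩ := exists_rat_mul_sq_add_three_squares (n := 4 * k + 1) (by omega)
    (inv_pos.mpr (half_pos hm))
  change Matrix (Fin (4 * k + 1 + 3)) (Fin (4 * k + 1 + 3)) ℚ at U
  have hrow := dotProduct_row_of_mul_transpose (n := Fin (4 * k + 1 + 3)) hU
  let a : Fin (4 * k + 1 + 3) → ℚ := Fin.append (fun _ => w) ![x, y, z]
  have hdot (i) : U i ⬝ᵥ Matrix.vecMul a U = m / 2 * a i := by
    rw [Matrix.vecMul_eq_sum, dotProduct_sum]
    simp only [dotProduct_smul, hrow]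
    simp [mul_comm]
  obtain ⟨v, hv⟩ := exists_sum_sub_sq_eq_of_dotProduct_const (n := 4 * k + 3)
    (fun i : Fin (4 * k + 1) => U (Fin.castAdd 3 i)) (Matrix.vecMul a U) (by
      nth_rw 1 [Matrix.vecMul_eq_sum]
      simp only [sum_dotProduct, smul_dotProduct, hdot]
      rw [Fin.sum_univ_add]
      simp only [a, Fin.append_left, Fin.append_right, Fin.sum_univ_three, Finset.sum_const,
        Finset.card_univ, Fintype.card_fin, smul_eq_mul, nsmul_eq_mul]
      simp only [Matrix.cons_val]
      have := mul_inv_cancel₀ (half_pos hm).ne'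
      rw [← h] at this
      linear_combination this) (e := m / 2 * w) (fun i => by simp [hdot, a])
  refine ⟨v, fun i j hij => ?_⟩
  rw [hv, sum_sub_sq_row_of_mul_transpose (n := Fin (4 * k + 1 + 3)) hU
    (fun h => hij (Fin.castAdd_injective _ _ h))]
  ring

/-- Equidistant points in `ℚ^{d+3}` when `d + 1 ≤ 4 * K ≤ d + 3`. -/
theorem exists_equidistant_of_le {d K : ℕ} (h₁ : d + 1 ≤ 4 * K) (h₂ : 4 * K ≤ d + 3) {m : ℚ}
    (hm : 0 < m) :
    ∃ v : Fin (d + 1) → Fin (d + 3) → ℚ, ∀ i j, i ≠ j → ∑ l, (v i l - v j l) ^ 2 = m := by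
  obtain ⟨U, hU⟩ := exists_mul_transpose_eq_smul_one K (half_pos hm)
  refine ⟨fun i => Function.extend (Fin.castLE h₂) (U (Fin.castLE h₁ i)) 0, fun i j hij => ?_⟩
  have hinj := Fin.castLE_injective h₂
  rw [← Fintype.sum_of_injective (Fin.castLE h₂) hinj
    (fun l => (U (Fin.castLE h₁ i) l - U (Fin.castLE h₁ j) l) ^ 2)]
  · rw [sum_sub_sq_row_of_mul_transpose hU (fun h => hij (Fin.castLE_injective _ h))]
    ring
  · intro l hl
    simp [Function.extend_apply' _ _ _ hl]
  · intro l
    simp [hinj.extend_apply]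

/-- Codimension-`3` stabilization: every positive rational is the squared edge length of a
regular `d`-simplex with vertices in `ℚ^{d+3}`. -/
theorem codim_three_all (d : ℕ) (hd : 1 ≤ d) (m : ℚ) (hm : 0 < m) :
    ∃ v : Fin (d + 1) → Fin (d + 3) → ℚ, IsRegularSimplex d (d + 3) m v := by
  obtain ⟨v, hv⟩ : ∃ v : Fin (d + 1) → Fin (d + 3) → ℚ,
      ∀ i j, i ≠ j → ∑ l, (v i l - v j l) ^ 2 = m := by
    by_cases h : 4 ∣ d
    · obtain ⟨k, rfl⟩ := h
      exact exists_equidistant_of_four_dvd k hm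
    · exact exists_equidistant_of_le (K := d / 4 + 1) (by omega) (by omega) hm
  exact ⟨v, affineIndependent_of_sum_sub_sq_eq hm hv, hv⟩
end

section
/- If d ≡ 1 (mod 4) and n = d + 1, then a positive rational m = 2a occurs as the squared edge length of a regular d-simplex with vertices in ℚⁿ if and only if a is a sum of two rational squares. -/
open Finset in
/-- If the functionals `N i`, `i ∈ s`, together with `P` separate the points of `H` and
`H` has dimension greater than `#s`, then some vector of `H` outside `ker P` satisfies
`L i x = ± N i x` for all `i ∈ s`. -/
theorem exists_sq_eq_sq_of_card_lt_finrank {K V W ι : Type*} [Field K] [CharZero K]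
    [AddCommGroup V] [Module K V] [FiniteDimensional K V] [AddCommGroup W] [Module K W]
    (L N : ι → V →ₗ[K] K) (P : V →ₗ[K] W) (s : Finset ι) (H : Submodule K V)
    (hs : #s < Module.finrank K H)
    (hN : ∀ x ∈ H, (∀ i ∈ s, N i x = 0) → P x = 0 → x = 0) :
    ∃ x ∈ H, (∀ i ∈ s, L i x ^ 2 = N i x ^ 2) ∧ P x ≠ 0 := by
  classical
  induction s using Finset.induction_on generalizing H with
  | empty =>
    have hH : H ≠ ⊥ := by
      rintro rfl
      simp at hs
    obtain ⟨x, hx, hx0⟩ := H.exists_mem_ne_zero_of_ne_bot hH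
    exact ⟨x, hx, by simp, fun h => hx0 (hN x hx (by simp) h)⟩
  | insert i s his ih =>
    rw [card_insert_of_notMem his] at hs
    have key : ∀ ε : K, ε ^ 2 = 1 →
        (∀ x ∈ H, L i x = ε * N i x → (∀ j ∈ s, N j x = 0) → P x = 0 → x = 0) →
        ∃ x ∈ H, (∀ j ∈ insert i s, L j x ^ 2 = N j x ^ 2) ∧ P x ≠ 0 := by
      intro ε hε h
      have hmem : ∀ x, x ∈ H ⊓ LinearMap.ker (L i - ε • N i) ↔
          x ∈ H ∧ L i x = ε * N i x := by
        intro x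
        simp [sub_eq_zero]
      have hdim : #s < Module.finrank K ↥(H ⊓ LinearMap.ker (L i - ε • N i)) := by
        have h1 := Submodule.finrank_sup_add_finrank_inf_eq H
          (LinearMap.ker (L i - ε • N i))
        have h2 := (L i - ε • N i).finrank_range_add_finrank_ker
        have h3 := Submodule.finrank_le (H ⊔ LinearMap.ker (L i - ε • N i))
        have h4 := Submodule.finrank_le (LinearMap.range (L i - ε • N i))
        rw [Module.finrank_self] at h4
        omega
      obtain ⟨x, hx, hxs, hP⟩ := ih _ hdim fun x hx => by
        rw [hmem] at hx
        exact h x hx.1 hx.2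
      rw [hmem] at hx
      refine ⟨x, hx.1, ?_, hP⟩
      simp only [mem_insert, forall_eq_or_imp]
      exact ⟨by rw [hx.2, mul_pow, hε, one_mul], hxs⟩
    by_cases h : ∀ x ∈ H, L i x = 1 * N i x → (∀ j ∈ s, N j x = 0) → P x = 0 → x = 0
    · exact key 1 (by simp) h
    · push Not at h
      obtain ⟨x, hx, hLx, hxs, hPx, hx0⟩ := h
      have hNx : N i x ≠ 0 := fun h0 => hx0 <| hN x hx (by
        simp only [mem_insert, forall_eq_or_imp]
        exact ⟨h0, hxs⟩) hPx
      refine key (-1) (by simp) fun y hy hLy hys hPy => ?_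
      have hz : N i x • y - N i y • x = 0 := by
        refine hN _ (H.sub_mem (H.smul_mem _ hy) (H.smul_mem _ hx)) ?_ (by simp [hPx, hPy])
        simp only [mem_insert, forall_eq_or_imp]
        refine ⟨by simp [mul_comm], fun j hj => by simp [hxs j hj, hys j hj]⟩
      have hLz := congrArg (L i) hz
      simp only [map_sub, map_smul, smul_eq_mul, map_zero, hLx, hLy] at hLz
      have hNy : N i y = 0 := by
        have : N i x * N i y = 0 := by linear_combination (-1 / 2 : K) * hLz
        exact (mul_eq_zero.mp this).resolve_left hNx
      simpa [hNy, hNx] using hz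

/-- The squared norm of an affine dependency among the vertices of an equilateral point set. -/
theorem sum_sq_sum_mul_of_equilateral {ι κ : Type*} [Fintype ι] [Fintype κ] {a : ℚ}
    {v : ι → κ → ℚ} (hv : ∀ i j, i ≠ j → ∑ k, (v i k - v j k) ^ 2 = 2 * a)
    {c : ι → ℚ} (hc : ∑ i, c i = 0) :
    ∑ k, (∑ i, c i * v i k) ^ 2 = a * ∑ i, c i ^ 2 := by
  classical
  have h1 : ∑ i, ∑ j, c i * c j * ∑ k, (v i k - v j k) ^ 2 = -(2 * a * ∑ i, c i ^ 2) := by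
    have h : ∀ i j, c i * c j * ∑ k, (v i k - v j k) ^ 2 =
        2 * a * (c i * c j) - if i = j then 2 * a * c i ^ 2 else 0 := by
      intro i j
      split_ifs with hij
      · subst hij
        simp
        ring
      · rw [hv i j hij]
        ring
    simp_rw [h, Finset.sum_sub_distrib, ← Finset.mul_sum, hc]
    simp [Finset.mul_sum]
  have h2 : ∑ i, ∑ j, c i * c j * ∑ k, (v i k - v j k) ^ 2 =
      -(2 * ∑ k, (∑ i, c i * v i k) ^ 2) := by
    have h : ∀ k, ∑ i, ∑ j, c i * c j * (v i k - v j k) ^ 2 =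
        -(2 * (∑ i, c i * v i k) ^ 2) := by
      intro k
      have e : ∀ i j, c i * c j * (v i k - v j k) ^ 2 =
          (c i * v i k ^ 2) * c j + c i * (c j * v j k ^ 2) -
            2 * ((c i * v i k) * (c j * v j k)) := fun i j => by ring
      simp_rw [e, Finset.sum_sub_distrib, Finset.sum_add_distrib, ← Finset.mul_sum,
        ← Finset.sum_mul, hc]
      ring
    calc ∑ i, ∑ j, c i * c j * ∑ k, (v i k - v j k) ^ 2
        = ∑ i, ∑ k, ∑ j, c i * c j * (v i k - v j k) ^ 2 :=
          Finset.sum_congr rfl fun i _ => by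
            simp_rw [Finset.mul_sum]
            exact Finset.sum_comm
      _ = ∑ k, ∑ i, ∑ j, c i * c j * (v i k - v j k) ^ 2 := Finset.sum_comm
      _ = -(2 * ∑ k, (∑ i, c i * v i k) ^ 2) := by
          simp_rw [h]
          rw [Finset.sum_neg_distrib, Finset.mul_sum]
  linarith

/-- Lagrange's four-square theorem for nonnegative rationals. -/
theorem Rat.exists_sum_four_squares {a : ℚ} (ha : 0 ≤ a) :
    ∃ p q r s : ℚ, p ^ 2 + q ^ 2 + r ^ 2 + s ^ 2 = a := by
  obtain ⟨p, q, r, s, h⟩ := Nat.sum_four_squares (a.num.toNat * a.den)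
  have hd : (a.den : ℚ) ≠ 0 := by exact_mod_cast a.den_nz
  have hn : ((a.num.toNat : ℕ) : ℚ) = a.num := by
    exact_mod_cast Int.toNat_of_nonneg (Rat.num_nonneg.mpr ha)
  have h' : (p : ℚ) ^ 2 + q ^ 2 + r ^ 2 + s ^ 2 = a.num * a.den := by
    rw [← hn]
    exact_mod_cast h
  refine ⟨p / a.den, q / a.den, r / a.den, s / a.den, ?_⟩
  have ha' : a = a.num / a.den := a.num_div_den.symm
  rw [eq_div_iff hd] at ha'
  field_simp
  rw [h', ← ha']
  ring

/-- An equilateral set of `4k + 2` points in `ℚ^(4k + 2)` has squared edge length twice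
a sum of two squares. -/
theorem exists_sum_two_squares_of_equilateral {k : ℕ} {a : ℚ} (ha : 0 < a)
    {v : Fin k × Fin 4 ⊕ Fin 2 → Fin k × Fin 4 ⊕ Fin 2 → ℚ}
    (hv : ∀ i j, i ≠ j → ∑ t, (v i t - v j t) ^ 2 = 2 * a) :
    ∃ x y : ℚ, a = x ^ 2 + y ^ 2 := by
  obtain ⟨p, q, r, s, hpqrs⟩ := Rat.exists_sum_four_squares ha.le
  let R : Matrix (Fin 4) (Fin 4) ℚ :=
    !![p, q, r, s; -q, p, -s, r; -r, s, p, -q; -s, -r, q, p]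
  let L (i : Fin k × Fin 4) : (Fin k × Fin 4 ⊕ Fin 2 → ℚ) →ₗ[ℚ] ℚ :=
    ∑ j, v j (Sum.inl i) • LinearMap.proj j
  let N (i : Fin k × Fin 4) : (Fin k × Fin 4 ⊕ Fin 2 → ℚ) →ₗ[ℚ] ℚ :=
    ∑ u, R i.2 u • LinearMap.proj (Sum.inl (i.1, u))
  let P : (Fin k × Fin 4 ⊕ Fin 2 → ℚ) →ₗ[ℚ] (Fin 2 → ℚ) :=
    LinearMap.funLeft ℚ ℚ Sum.inr
  let S : (Fin k × Fin 4 ⊕ Fin 2 → ℚ) →ₗ[ℚ] ℚ := ∑ j, LinearMap.proj j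
  have hL : ∀ i c, L i c = ∑ j, c j * v j (Sum.inl i) := fun i c => by
    simp [L, mul_comm]
  have hNsum : ∀ c, ∑ i, N i c ^ 2 = a * ∑ i, c (Sum.inl i) ^ 2 := by
    intro c
    rw [Fintype.sum_prod_type, Fintype.sum_prod_type, Finset.mul_sum]
    refine Finset.sum_congr rfl fun j _ => ?_
    simp [N, R, Fin.sum_univ_four, ← hpqrs]
    ring
  have hdim : (Finset.univ : Finset (Fin k × Fin 4)).card <
      Module.finrank ℚ (LinearMap.ker S) := by
    have h1 := S.finrank_range_add_finrank_ker
    have h2 := Submodule.finrank_le (LinearMap.range S)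
    rw [Module.finrank_self] at h2
    simp at h1 ⊢
    omega
  obtain ⟨c, hc, hLN, hP⟩ := exists_sq_eq_sq_of_card_lt_finrank L N P Finset.univ
    (LinearMap.ker S) hdim (by
      intro c _ hN hP
      have h0 := hNsum c
      simp only [fun i => hN i (Finset.mem_univ i)] at h0
      have h1 : ∑ i, c (Sum.inl i) ^ 2 = 0 := by
        simpa [ha.ne'] using h0.symm
      rw [Finset.sum_eq_zero_iff_of_nonneg fun _ _ => sq_nonneg _] at h1
      ext (i | u)
      · simpa using h1 i (Finset.mem_univ i)
      · exact congrFun hP u)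
  have hc' : ∑ j, c j = 0 := by simpa [S] using hc
  have hsum := sum_sq_sum_mul_of_equilateral hv hc'
  rw [Fintype.sum_sum_type, Fintype.sum_sum_type, mul_add, ← hNsum] at hsum
  simp_rw [← hL] at hsum
  rw [Finset.sum_congr rfl hLN, add_right_inj, Fin.sum_univ_two, Fin.sum_univ_two] at hsum
  have hpos : c (Sum.inr 0) ^ 2 + c (Sum.inr 1) ^ 2 ≠ 0 := by
    intro h
    refine hP (funext fun u => ?_)
    have h0 : c (Sum.inr 0) = 0 := by nlinarith [sq_nonneg (c (Sum.inr 1))]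
    have h1 : c (Sum.inr 1) = 0 := by nlinarith [sq_nonneg (c (Sum.inr 0))]
    fin_cases u
    · exact h0
    · exact h1
  generalize c (Sum.inr 0) = C at *
  generalize c (Sum.inr 1) = D at *
  generalize ∑ i, c i * v i (Sum.inr 0) = A at *
  generalize ∑ i, c i * v i (Sum.inr 1) = B at *
  refine ⟨(A * C + B * D) / (C ^ 2 + D ^ 2), (A * D - B * C) / (C ^ 2 + D ^ 2), ?_⟩
  field_simp
  linear_combination (-(C ^ 2 + D ^ 2)) * hsum

/-- The rows of a square rational matrix `M` with `M Mᵀ = a` form a regular simplex. -/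
theorem isRegularSimplex_of_mul_transpose_eq_smul_one {d : ℕ} {a : ℚ} (ha : a ≠ 0)
    {M : Matrix (Fin (d + 1)) (Fin (d + 1)) ℚ} (hM : M * M.transpose = a • 1) :
    IsRegularSimplex d (d + 1) (2 * a) M := by
  constructor
  · have hu : IsUnit M := by
      refine .of_mul_eq_one (a⁻¹ • M.transpose) ?_
      rw [Matrix.mul_smul, hM, smul_smul, inv_mul_cancel₀ ha, one_smul]
    exact (Matrix.linearIndependent_rows_of_isUnit hu).affineIndependent
  · intro i j hij
    have h : ∀ i j, ∑ k, M i k * M j k = if i = j then a else 0 := fun i j => by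
      simpa [Matrix.mul_apply, Matrix.one_apply] using congrFun (congrFun hM i) j
    calc ∑ k, (M i k - M j k) ^ 2
        = ∑ k, M i k * M i k + ∑ k, M j k * M j k - 2 * ∑ k, M i k * M j k := by
          rw [Finset.mul_sum, ← Finset.sum_add_distrib, ← Finset.sum_sub_distrib]
          exact Finset.sum_congr rfl fun k _ => by ring
      _ = 2 * a := by
          rw [h, h, h, if_pos rfl, if_pos rfl, if_neg hij]
          ring

/-- For `d ≡ 1 (mod 4)` and `n = d + 1`, the squared edge length `2a` occurs iff `a` is
a sum of two rational squares. -/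
theorem codim_one_one_mod_four (d : ℕ) (hd : d % 4 = 1) (a : ℚ) (ha : 0 < a) :
    (∃ v : Fin (d + 1) → Fin (d + 1) → ℚ, IsRegularSimplex d (d + 1) (2 * a) v) ↔
      ∃ x y : ℚ, a = x ^ 2 + y ^ 2 := by
  constructor
  · rintro ⟨v, -, hv⟩
    let e : Fin (d / 4) × Fin 4 ⊕ Fin 2 ≃ Fin (d + 1) :=
      Fintype.equivFinOfCardEq (by simp; omega)
    refine exists_sum_two_squares_of_equilateral (v := fun i j => v (e i) (e j)) ha
      fun i j hij => ?_
    rw [← hv (e i) (e j) (e.injective.ne hij)]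
    exact e.sum_comp fun t => (v (e i) t - v (e j) t) ^ 2
  · rintro ⟨x, y, hxy⟩
    let e : Fin 2 × Fin ((d + 1) / 2) ≃ Fin (d + 1) :=
      Fintype.equivFinOfCardEq (by simp; omega)
    let B : Matrix (Fin 2) (Fin 2) ℚ := !![x, -y; y, x]
    have hB : B * B.transpose = a • 1 := by
      ext i j
      fin_cases i <;> fin_cases j <;> simp [B, Matrix.mul_apply, hxy] <;> ring
    refine ⟨_, isRegularSimplex_of_mul_transpose_eq_smul_one ha.ne'
      (M := Matrix.reindex e e (Matrix.blockDiagonal fun _ => B)) ?_⟩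
    rw [Matrix.transpose_reindex, Matrix.blockDiagonal_transpose]
    simp only [Matrix.reindex_apply, Matrix.submatrix_mul_equiv, ← Matrix.blockDiagonal_mul, hB]
    change (Matrix.blockDiagonal (a • 1)).submatrix e.symm e.symm = _
    rw [Matrix.blockDiagonal_smul, Matrix.blockDiagonal_one, Matrix.submatrix_smul, Pi.smul_apply,
      Pi.smul_apply, Matrix.submatrix_one_equiv]
end
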